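/- arXiv:1106.3112 — 3 statements merged into one kernel-verified Lean document; each statement's English description precedes it below -/
import Mathlib

section
/- Let R be a commutative Noetherian ring and let A = R[X₁, X₂, X₃, …] be the polynomial ring over R in countably infinitely many variables. Then a prime ideal 𝔭 of A has finite height if and only if 𝔭 is finitely generated as an ideal. -/
/-!
`R[σ]` is the union of its subrings `R[s]`, `s ⊆ σ` finite, which are Noetherian; a prime `q` of
`R[s]` generates a prime of `R[σ]`, and the contraction of `q R[σ]` to `R[s]` is `q`.

If `𝔭` has finite height, then among the finitely generated primes `(𝔭 ∩ R[s]) R[σ]` below `𝔭` there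
is a maximal one. Any element of `𝔭` outside of it would, together with its generators, lie in some
larger `(𝔭 ∩ R[t]) R[σ]`; hence it equals `𝔭`.

Conversely, let `𝔭` be generated by `n` elements. A finite chain of primes below `𝔭` stays strict
when contracted to `R[s]` for all large `s`, while `𝔭 ∩ R[s]` is itself generated by `n` elements as
soon as `R[s]` contains the generators, so Krull's height theorem bounds the length of the chain
by `n`.
-/

open Filter

theorem exists_maximal_of_height_ne_top {α : Type*} [Preorder α] {a : α}
    (ha : Order.height a ≠ ⊤) {s : Set α} (hs : s.Nonempty) (hsa : a ∈ upperBounds s) :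
    ∃ m, Maximal (· ∈ s) m := by
  have : Nonempty s := hs.to_subtype
  have hle : ⨆ x : s, Order.height (x : α) ≤ Order.height a :=
    iSup_le fun x ↦ Order.height_mono (hsa x.2)
  obtain ⟨m, hm⟩ := ENat.exists_eq_iSup_of_lt_top (hle.trans_lt ha.lt_top)
  refine ⟨m, m.2, fun x hx hmx ↦ ?_⟩
  by_contra hxm
  have hlt : Order.height (m : α) < Order.height x :=
    Order.height_strictMono (lt_of_le_not_ge hmx hxm) ((hm.trans_le hle).trans_lt ha.lt_top)
  have hge : Order.height x ≤ Order.height (m : α) :=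
    (le_iSup (fun y : s ↦ Order.height (y : α)) ⟨x, hx⟩).trans_eq hm.symm
  exact hlt.not_ge hge

section PrimeIdeal

variable {A B : Type*} [CommRing A] [CommRing B]

theorem fg_of_height_ne_top_of_exists_fg_prime {p : PrimeSpectrum A} (hp : Order.height p ≠ ⊤)
    (h : ∀ I : Ideal A, I.FG → I ≤ p.asIdeal →
      ∃ q : PrimeSpectrum A, I ≤ q.asIdeal ∧ q ≤ p ∧ q.asIdeal.FG) :
    p.asIdeal.FG := by
  obtain ⟨q₀, -, hq₀⟩ := h ⊥ Submodule.fg_bot bot_le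
  obtain ⟨m, ⟨hmp, hm⟩, hmax⟩ :=
    exists_maximal_of_height_ne_top (s := {q | q ≤ p ∧ q.asIdeal.FG}) hp ⟨q₀, hq₀⟩
      fun _ hq ↦ hq.1
  suffices hpm : p ≤ m from le_antisymm hpm hmp ▸ hm
  intro f hf
  obtain ⟨q, hmfq, hq⟩ := h (m.asIdeal ⊔ Ideal.span {f})
    (Submodule.FG.sup hm (Submodule.fg_span_singleton f))
    (sup_le hmp ((Ideal.span_singleton_le_iff_mem _).2 hf))
  have hqm : q ≤ m := hmax hq (le_sup_left.trans hmfq)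
  exact hqm (hmfq (Ideal.mem_sup_right (Ideal.mem_span_singleton_self f)))

theorem height_comap_le_ncard [IsNoetherianRing B] {ψ : B →+* A}
    (hψ : ∀ I : Ideal B, (I.map ψ).comap ψ = I) {p : PrimeSpectrum A} {S : Set A}
    (hS : S.Finite) (hSψ : S ⊆ Set.range ψ) (hp : p.asIdeal = Ideal.span S) :
    Order.height (PrimeSpectrum.comap ψ p) ≤ S.ncard := by
  obtain ⟨T, -, hinj, rfl⟩ :=
    Set.SurjOn.exists_subset_injOn_image_eq (s := Set.univ) (Set.image_univ ▸ hSψ)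
  have hspan : (PrimeSpectrum.comap ψ p).asIdeal = Ideal.span T := by
    rw [PrimeSpectrum.comap_asIdeal, hp, ← Ideal.map_span, hψ]
  rw [← PrimeSpectrum.height_eq_orderHeight, hinj.ncard_image]
  apply Ideal.height_le_card_of_mem_minimalPrimes_span (hS.of_finite_image hinj)
  rw [← hspan, Ideal.minimalPrimes_eq_subsingleton_self]
  rfl

end PrimeIdeal

/-- The family of ring homomorphisms `φ i : B i → A` covers `A` along the filter `l`: each element
of `A` is in the range of `φ i` for all large `i`. It expresses that `A` is the union of a directed
family of subrings, with `l = atTop`. -/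
def EventuallyCovers {ι A : Type*} {B : ι → Type*} [CommRing A] [∀ i, CommRing (B i)]
    (φ : ∀ i, B i →+* A) (l : Filter ι) : Prop :=
  ∀ a, ∀ᶠ i in l, a ∈ Set.range (φ i)

namespace EventuallyCovers

variable {ι A : Type*} {B : ι → Type*} [CommRing A] [∀ i, CommRing (B i)]
  {φ : ∀ i, B i →+* A} {l : Filter ι}

theorem eventually_subset_range (hφ : EventuallyCovers φ l) {S : Set A} (hS : S.Finite) :
    ∀ᶠ i in l, S ⊆ Set.range (φ i) :=
  hS.eventually_all.2 fun a _ ↦ hφ a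

theorem eventually_le_map_comap (hφ : EventuallyCovers φ l) {I J : Ideal A} (hI : I.FG)
    (hIJ : I ≤ J) : ∀ᶠ i in l, I ≤ (J.comap (φ i)).map (φ i) := by
  obtain ⟨S, rfl⟩ := hI
  filter_upwards [hφ.eventually_subset_range S.finite_toSet] with i hi
  refine Ideal.span_le.2 fun a ha ↦ ?_
  obtain ⟨b, rfl⟩ := hi ha
  exact Ideal.mem_map_of_mem _ (hIJ (Ideal.subset_span ha))

theorem eventually_comap_lt_comap (hφ : EventuallyCovers φ l) {p q : PrimeSpectrum A}
    (hpq : p < q) :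
    ∀ᶠ i in l, PrimeSpectrum.comap (φ i) p < PrimeSpectrum.comap (φ i) q := by
  obtain ⟨a, haq, hap⟩ := SetLike.exists_of_lt (show p.asIdeal < q.asIdeal from hpq)
  filter_upwards [hφ a] with i hi
  obtain ⟨b, rfl⟩ := hi
  exact lt_of_le_not_ge (Ideal.comap_mono hpq.le) fun hle ↦ hap (hle haq)

theorem eventually_le_height_comap (hφ : EventuallyCovers φ l) {p : PrimeSpectrum A} {n : ℕ}
    (hn : n ≤ Order.height p) : ∀ᶠ i in l, n ≤ Order.height (PrimeSpectrum.comap (φ i) p) := by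
  obtain ⟨c, rfl, rfl⟩ := Order.exists_series_of_le_height p hn
  have hstep : ∀ᶠ i in l, ∀ k : Fin c.length,
      PrimeSpectrum.comap (φ i) (c k.castSucc) < PrimeSpectrum.comap (φ i) (c k.succ) :=
    eventually_all.2 fun k ↦ hφ.eventually_comap_lt_comap (c.step k)
  filter_upwards [hstep] with i hi
  exact Order.length_le_height_last (p := ⟨c.length, fun k ↦ PrimeSpectrum.comap (φ i) (c k), hi⟩)

theorem fg_of_height_ne_top [l.NeBot] [∀ i, IsNoetherianRing (B i)] (hφ : EventuallyCovers φ l)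
    (hprime : ∀ i (q : Ideal (B i)), q.IsPrime → (q.map (φ i)).IsPrime) {p : PrimeSpectrum A}
    (hp : Order.height p ≠ ⊤) : p.asIdeal.FG := by
  refine fg_of_height_ne_top_of_exists_fg_prime hp fun I hI hIp ↦ ?_
  obtain ⟨i, hi⟩ := (hφ.eventually_le_map_comap hI hIp).exists
  have hfg : (p.asIdeal.comap (φ i)).FG := IsNoetherian.noetherian _
  exact ⟨⟨_, hprime i (p.asIdeal.comap (φ i)) inferInstance⟩, hi, Ideal.map_comap_le,
    Ideal.FG.map hfg (φ i)⟩

theorem height_le_ncard [l.NeBot] [∀ i, IsNoetherianRing (B i)] (hφ : EventuallyCovers φ l)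
    (hcomap : ∀ i (I : Ideal (B i)), (I.map (φ i)).comap (φ i) = I) {p : PrimeSpectrum A}
    {S : Set A} (hS : S.Finite) (hp : p.asIdeal = Ideal.span S) : Order.height p ≤ S.ncard := by
  refine ENat.forall_natCast_le_iff_le.1 fun n hn ↦ ?_
  obtain ⟨i, hni, hSi⟩ :=
    ((hφ.eventually_le_height_comap hn).and (hφ.eventually_subset_range hS)).exists
  exact hni.trans (height_comap_le_ncard (hcomap i) hS hSi hp)

end EventuallyCovers

section MvPolynomial

open MvPolynomial

variable {σ τ R : Type*} [CommRing R]

theorem isPrime_map_C {P : Ideal R} (hP : P.IsPrime) :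
    (P.map (C : R →+* MvPolynomial σ R)).IsPrime := by
  have hker := RingHom.ker_isPrime (map (σ := σ) (Ideal.Quotient.mk P))
  rwa [ker_map, Ideal.mk_ker] at hker

theorem isPrime_map_rename {f : τ → σ} (hf : f.Injective) {P : Ideal (MvPolynomial τ R)}
    (hP : P.IsPrime) : (P.map (rename f : MvPolynomial τ R →ₐ[R] MvPolynomial σ R)).IsPrime := by
  classical
  let ρ := (Set.range f)ᶜ
  let sumEquiv : ↥ρ ⊕ τ ≃ σ := (Equiv.sumComm _ _).trans
    (((Equiv.ofInjective f hf).sumCongr (Equiv.refl ρ)).trans (Equiv.Set.sumCompl (Set.range f)))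
  have hsum (i : τ) : sumEquiv (Sum.inr i) = f i := Equiv.Set.sumCompl_apply_inl _ _
  let iterEquiv : MvPolynomial ρ (MvPolynomial τ R) ≃ₐ[R] MvPolynomial σ R :=
    (sumAlgEquiv R ρ τ).symm.trans (renameEquiv R sumEquiv)
  have hiter : (iterEquiv : MvPolynomial ρ (MvPolynomial τ R) →+* MvPolynomial σ R).comp C =
      RingHomClass.toRingHom (rename f) := by
    ext i
    · simp [iterEquiv]
    · simp [iterEquiv, hsum]
  have hC := isPrime_map_C (σ := ρ) hP
  rw [← Ideal.map_coe (rename f), ← hiter, ← Ideal.map_map]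
  exact Ideal.map_isPrime_of_equiv iterEquiv

theorem comap_map_rename {f : τ → σ} (hf : f.Injective) (I : Ideal (MvPolynomial τ R)) :
    (I.map (rename f : MvPolynomial τ R →ₐ[R] MvPolynomial σ R)).comap
      (rename f : MvPolynomial τ R →ₐ[R] MvPolynomial σ R) = I := by
  refine le_antisymm ?_ Ideal.le_comap_map
  refine (Ideal.comap_le_map_of_inverse _ (killCompl hf) _ (killCompl_rename_app hf)).trans ?_
  rw [Ideal.map_mapₐ, killCompl_comp_rename]
  exact (Ideal.map_id I).le

variable (σ R) in
/-- The inclusion of the polynomials in the variables from the finite set `s` into all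
polynomials. -/
noncomputable def finsetInclusion (s : Finset σ) : MvPolynomial s R →+* MvPolynomial σ R :=
  (rename Subtype.val : MvPolynomial s R →ₐ[R] MvPolynomial σ R)

theorem eventuallyCovers_finsetInclusion : EventuallyCovers (finsetInclusion σ R) atTop := by
  intro f
  filter_upwards [eventually_ge_atTop f.vars] with s hs
  exact exists_rename_eq_of_vars_subset_range f _ Subtype.val_injective (by simpa using hs)

end MvPolynomial

theorem finite_height_iff_fg_general {σ R : Type*} [CommRing R] [IsNoetherianRing R]
    (𝔭 : Ideal (MvPolynomial σ R)) (hp : 𝔭.IsPrime) :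
    Order.height (⟨𝔭, hp⟩ : PrimeSpectrum (MvPolynomial σ R)) ≠ ⊤ ↔ 𝔭.FG := by
  have hcov := eventuallyCovers_finsetInclusion (σ := σ) (R := R)
  constructor
  · exact hcov.fg_of_height_ne_top fun s q ↦ isPrime_map_rename Subtype.val_injective
  · rintro ⟨S, hS⟩
    have hle : Order.height (⟨𝔭, hp⟩ : PrimeSpectrum _) ≤ (S : Set (MvPolynomial σ R)).ncard :=
      hcov.height_le_ncard (fun s ↦ comap_map_rename Subtype.val_injective) S.finite_toSet hS.symm
    exact ne_top_of_le_ne_top (ENat.natCast_ne_top _) hle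

/-- Let `R` be a commutative Noetherian ring and
`A = R[X₁, X₂, …] = MvPolynomial ℕ R` the polynomial ring in countably many
variables. A prime ideal `𝔭` of `A` has finite height iff it is finitely
generated. Height is `Order.height` of the point of the prime spectrum, i.e.
the sup of lengths of strictly increasing chains of primes ending at `𝔭`. -/
theorem finite_height_iff_fg (R : Type*) [CommRing R] [IsNoetherianRing R]
    (𝔭 : Ideal (MvPolynomial ℕ R)) (hp : 𝔭.IsPrime) :
    Order.height (⟨𝔭, hp⟩ : PrimeSpectrum (MvPolynomial ℕ R)) ≠ ⊤ ↔ 𝔭.FG :=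
  finite_height_iff_fg_general 𝔭 hp
end

section
/- Every finitely presented module N over the polynomial algebra A = ℂ[X₁, X₂, X₃, …] in countably infinitely many variables admits a finite resolution by finite rank free A-modules: there exist a natural number n and an exact sequence 0 → Fₙ → Fₙ₋₁ → ⋯ → F₀ → N → 0 of A-modules in which each Fᵢ is a free A-module of finite rank. -/
open MvPolynomial

/-!
A finitely presented module involves only finitely many coefficients, so its relation module `K`
is the base change of a finitely generated module over a polynomial ring `R[Xₛ]` in finitely many
variables; since `R[Xₛ] → R[X₁, X₂, …]` is flat, a resolution over `R[Xₛ]` extends to one of `K`.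

This leaves Hilbert's syzygy theorem in the form: if every finite `R`-module has a finite free
resolution, so does every finite `R[X]`-module. Filter a submodule `K ⊆ R[X]ʳ` by degree, with
`F d` the elements of degree less than `d`. These are finite `R`-modules, and for large `d`
`0 → R[X] ⊗ F d → R[X] ⊗ F (d + 1) → K → 0`, with maps `p ⊗ v ↦ X p ⊗ v - p ⊗ X v` and
`p ⊗ v ↦ p v`, is exact. Resolutions of the first two terms come from `R` by base change, and
their mapping cone resolves `K`.
-/

open scoped TensorProduct Polynomial

universe u

section KernelSequence

variable {R M N P M' N' P' : Type*} [Ring R]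
  [AddCommGroup M] [Module R M] [AddCommGroup N] [Module R N] [AddCommGroup P] [Module R P]
  [AddCommGroup M'] [Module R M'] [AddCommGroup N'] [Module R N'] [AddCommGroup P'] [Module R P']

/-- The map `ker p → ker q` induced by the top row of a commutative square, as in the snake lemma.
It relates the first syzygies of the modules in the bottom row. -/
def kerMap {f : M →ₗ[R] N} {f' : M' →ₗ[R] N'} (p : M →ₗ[R] M') (q : N →ₗ[R] N')
    (h : q ∘ₗ f = f' ∘ₗ p) : LinearMap.ker p →ₗ[R] LinearMap.ker q :=
  f.restrict fun x hx ↦ by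
    rw [LinearMap.mem_ker] at hx ⊢
    rw [← LinearMap.comp_apply, h, LinearMap.comp_apply, hx, map_zero]

variable {f : M →ₗ[R] N} {g : N →ₗ[R] P} {f' : M' →ₗ[R] N'} {g' : N' →ₗ[R] P'}
  {p : M →ₗ[R] M'} {q : N →ₗ[R] N'} {s : P →ₗ[R] P'}

theorem kerMap_injective (hf : Function.Injective f) (hpq : q ∘ₗ f = f' ∘ₗ p) :
    Function.Injective (kerMap p q hpq) :=
  fun _ _ h ↦ Subtype.ext (hf (congrArg Subtype.val h))

theorem kerMap_exact (hfg : Function.Exact f g) (hf' : Function.Injective f')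
    (hpq : q ∘ₗ f = f' ∘ₗ p) (hqs : s ∘ₗ g = g' ∘ₗ q) :
    Function.Exact (kerMap p q hpq) (kerMap q s hqs) := by
  rintro ⟨y, hy⟩
  constructor
  · intro h
    obtain ⟨x, rfl⟩ := (hfg y).1 (congrArg Subtype.val h)
    have hx : f' (p x) = 0 := (LinearMap.congr_fun hpq x).symm.trans hy
    exact ⟨⟨x, hf' (hx.trans (map_zero f').symm)⟩, rfl⟩
  · rintro ⟨x, hx⟩
    exact Subtype.ext ((hfg y).2 ⟨x, congrArg Subtype.val hx⟩)

theorem kerMap_surjective (hgf : g ∘ₗ f = 0) (hg : Function.Surjective g)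
    (hfg' : Function.Exact f' g') (hp : Function.Surjective p)
    (hpq : q ∘ₗ f = f' ∘ₗ p) (hqs : s ∘ₗ g = g' ∘ₗ q) :
    Function.Surjective (kerMap q s hqs) := by
  rintro ⟨z, hz⟩
  obtain ⟨y, rfl⟩ := hg z
  obtain ⟨x', hx'⟩ := (hfg' (q y)).1 ((LinearMap.congr_fun hqs y).symm.trans hz)
  obtain ⟨x, rfl⟩ := hp x'
  have hqf : q (f x) = q y := (LinearMap.congr_fun hpq x).trans hx'
  have hgfx : g (f x) = 0 := LinearMap.congr_fun hgf x
  exact ⟨⟨y - f x, by simp [hqf]⟩, Subtype.ext (by simp [kerMap, hgfx])⟩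

end KernelSequence

/-- `M` has a resolution `0 → Fₙ₋₁ → ⋯ → F₀ → M → 0` by `n` free modules of finite rank. The
resolution is encoded by the recursion that the kernel of `F₀ → M` has one of length `n - 1`;
these kernels live in the universe of `R`, hence so does `M`. -/
def HasFiniteFreeResolution (R : Type u) [CommRing R] :
    ℕ → ∀ (M : Type u) [AddCommGroup M] [Module R M], Prop
  | 0, M, _, _ => Subsingleton M
  | n + 1, M, _, _ => ∃ (r : ℕ) (f : (Fin r → R) →ₗ[R] M),
      Function.Surjective f ∧ HasFiniteFreeResolution R n (LinearMap.ker f)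

namespace HasFiniteFreeResolution

variable {R S M N P : Type u} [CommRing R] [CommRing S] [AddCommGroup M] [Module R M]
  [AddCommGroup N] [Module R N] [AddCommGroup P] [Module R P] {m n : ℕ}

theorem of_linearEquiv (e : M ≃ₗ[R] N) (h : HasFiniteFreeResolution R n M) :
    HasFiniteFreeResolution R n N := by
  cases n with
  | zero =>
    have : Subsingleton M := h
    exact e.symm.toEquiv.subsingleton
  | succ n =>
    obtain ⟨r, f, hf, h⟩ := h
    exact ⟨r, e.toLinearMap ∘ₗ f, e.surjective.comp hf, by rwa [LinearEquiv.ker_comp]⟩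

theorem of_subsingleton [Subsingleton M] (n : ℕ) : HasFiniteFreeResolution R n M := by
  induction n generalizing M with
  | zero => exact ‹_›
  | succ n ih => exact ⟨0, 0, Function.surjective_to_subsingleton _, ih⟩

theorem succ (h : HasFiniteFreeResolution R n M) : HasFiniteFreeResolution R (n + 1) M := by
  induction n generalizing M with
  | zero =>
    have : Subsingleton M := h
    exact of_subsingleton 1
  | succ n ih =>
    obtain ⟨r, f, hf, h⟩ := h
    exact ⟨r, f, hf, ih h⟩

theorem mono (hmn : m ≤ n) (h : HasFiniteFreeResolution R m M) : HasFiniteFreeResolution R n M :=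
  Nat.le_induction h (fun _ _ ↦ succ) n hmn

theorem finitePresentation (h : HasFiniteFreeResolution R n M) :
    Module.FinitePresentation R M := by
  induction n generalizing M with
  | zero =>
    have : Subsingleton M := h
    infer_instance
  | succ n ih =>
    obtain ⟨r, f, hf, h⟩ := h
    have := ih h
    exact Module.finitePresentation_of_surjective f hf (Module.Finite.iff_fg.1 inferInstance)

theorem of_surjective {F : Type u} [AddCommGroup F] [Module R F] [Module.Free R F]
    [Module.Finite R F] {f : F →ₗ[R] M} (hf : Function.Surjective f)
    (h : HasFiniteFreeResolution R n (LinearMap.ker f)) :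
    HasFiniteFreeResolution R (n + 1) M := by
  let b : F ≃ₗ[R] (Fin _ → R) :=
    ((Module.Free.chooseBasis R F).reindex (Fintype.equivFin _)).equivFun
  refine ⟨_, f ∘ₗ b.symm.toLinearMap, hf.comp b.symm.surjective, ?_⟩
  rw [LinearMap.ker_comp, ← Submodule.map_equiv_eq_comap_symm]
  exact h.of_linearEquiv (b.submoduleMap _)

theorem of_exact {K F : Type u} [AddCommGroup K] [Module R K] [AddCommGroup F]
    [Module R F] [Module.Free R F] [Module.Finite R F] {i : K →ₗ[R] F} {f : F →ₗ[R] M}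
    (hi : Function.Injective i) (hif : Function.Exact i f) (hf : Function.Surjective f)
    (h : HasFiniteFreeResolution R n K) : HasFiniteFreeResolution R (n + 1) M :=
  of_surjective hf (h.of_linearEquiv ((LinearEquiv.ofInjective i hi).trans
    (LinearEquiv.ofEq _ _ hif.linearMap_ker_eq.symm)))

theorem of_free [Module.Free R M] [Module.Finite R M] : HasFiniteFreeResolution R 1 M :=
  of_surjective (f := LinearMap.id) Function.surjective_id <| by
    rw [LinearMap.ker_id]
    exact of_subsingleton 0

theorem of_extension {f : M →ₗ[R] N} {g : N →ₗ[R] P} (hf : Function.Injective f)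
    (hfg : Function.Exact f g) (hg : Function.Surjective g)
    (hM : HasFiniteFreeResolution R n M) (hP : HasFiniteFreeResolution R n P) :
    HasFiniteFreeResolution R n N := by
  induction n generalizing M N P with
  | zero =>
    have : Subsingleton M := hM
    have : Subsingleton P := hP
    refine subsingleton_of_forall_eq (0 : N) fun y ↦ ?_
    obtain ⟨x, rfl⟩ := (hfg y).1 (Subsingleton.elim _ _)
    rw [Subsingleton.elim x 0, map_zero]
  | succ n ih =>
    obtain ⟨r, p, hp, hM⟩ := hM
    obtain ⟨s, q, hq, hP⟩ := hP
    obtain ⟨l, hl⟩ := Module.projective_lifting_property g q hg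
    -- The horseshoe: `p` and a lift `l` of `q` together cover `N`, and the kernels of `p`,
    -- of this cover and of `q` again form a short exact sequence.
    let t : (Fin r → R) × (Fin s → R) →ₗ[R] N := (f ∘ₗ p).coprod l
    have htp : t ∘ₗ LinearMap.inl R _ _ = f ∘ₗ p := LinearMap.coprod_inl _ _
    have hqt : q ∘ₗ LinearMap.snd R _ _ = g ∘ₗ t := by
      rw [LinearMap.comp_coprod, hl, ← LinearMap.comp_assoc, hfg.linearMap_comp_eq_zero,
        LinearMap.zero_comp, LinearMap.coprod_zero_left]
    have ht : Function.Surjective t := by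
      intro y
      obtain ⟨w, hw⟩ := hq (g y)
      have hlw : g (l w) = g y := (LinearMap.congr_fun hl w).trans hw
      obtain ⟨x, hx⟩ := (hfg (y - l w)).1 (by simp [hlw])
      obtain ⟨v, rfl⟩ := hp x
      exact ⟨(v, w), by simp [t, hx]⟩
    refine of_surjective ht (ih (kerMap_injective LinearMap.inl_injective htp)
      (kerMap_exact Function.Exact.inl_snd hf htp hqt) ?_ hM hP)
    exact kerMap_surjective (LinearMap.snd_comp_inl R _ _) LinearMap.snd_surjective hfg hp htp hqt

theorem of_cokernel {f : M →ₗ[R] N} {g : N →ₗ[R] P} (hf : Function.Injective f)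
    (hfg : Function.Exact f g) (hg : Function.Surjective g)
    (hM : HasFiniteFreeResolution R n M) (hN : HasFiniteFreeResolution R n N) :
    HasFiniteFreeResolution R (n + 1) P := by
  cases n with
  | zero =>
    have : Subsingleton N := hN
    have := hg.subsingleton
    exact of_subsingleton 1
  | succ n =>
    -- For a cover `p` of `N`, the kernel of `g ∘ p` is an extension of `ker g ≃ M` by `ker p`.
    obtain ⟨r, p, hp, hN⟩ := hN
    refine ⟨r, g ∘ₗ p, hg.comp hp, ?_⟩
    let i : LinearMap.ker p →ₗ[R] LinearMap.ker (g ∘ₗ p) :=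
      Submodule.inclusion (LinearMap.ker_le_ker_comp p g)
    let j : LinearMap.ker (g ∘ₗ p) →ₗ[R] LinearMap.ker g := p.restrict fun _ hv ↦ hv
    have hij : Function.Exact i j := fun v ↦
      ⟨fun hv ↦ ⟨⟨v, congrArg Subtype.val hv⟩, rfl⟩, by rintro ⟨w, rfl⟩; exact Subtype.ext w.2⟩
    have hj : Function.Surjective j := by
      rintro ⟨y, hy⟩
      obtain ⟨v, rfl⟩ := hp y
      exact ⟨⟨v, hy⟩, rfl⟩
    exact of_extension (Submodule.inclusion_injective _) hij hj hN.succ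
      (hM.of_linearEquiv ((LinearEquiv.ofInjective f hf).trans
        (LinearEquiv.ofEq _ _ hfg.linearMap_ker_eq.symm)))

theorem baseChange [Algebra R S] [Module.Flat R S] (h : HasFiniteFreeResolution R n M) :
    HasFiniteFreeResolution S n (S ⊗[R] M) := by
  induction n generalizing M with
  | zero =>
    have : Subsingleton M := h
    exact (inferInstance : Subsingleton (S ⊗[R] M))
  | succ n ih =>
    obtain ⟨r, f, hf, h⟩ := h
    exact of_exact (i := (LinearMap.ker f).subtype.baseChange S) (f := f.baseChange S)
      (Module.Flat.lTensor_preserves_injective_linearMap _ (Submodule.injective_subtype _))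
      (lTensor_exact S (LinearMap.exact_subtype_ker_map f) hf)
      (LinearMap.lTensor_surjective S hf) (ih h)

theorem exists_complex (h : HasFiniteFreeResolution R n M) :
    ∃ (r : ℕ → ℕ) (d : ∀ i : ℕ, (Fin (r (i + 1)) → R) →ₗ[R] (Fin (r i) → R))
      (ε : (Fin (r 0) → R) →ₗ[R] M),
      Function.Surjective ε ∧ LinearMap.range (d 0) = LinearMap.ker ε ∧
      (∀ i : ℕ, LinearMap.range (d (i + 1)) = LinearMap.ker (d i)) ∧
      (∀ i : ℕ, n ≤ i → r i = 0) := by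
  induction n generalizing M with
  | zero =>
    have : Subsingleton M := h
    exact ⟨fun _ ↦ 0, fun _ ↦ 0, 0, Function.surjective_to_subsingleton _,
      Subsingleton.elim _ _, fun _ ↦ Subsingleton.elim _ _, fun _ _ ↦ rfl⟩
  | succ n ih =>
    obtain ⟨r₀, f, hf, h⟩ := h
    obtain ⟨r, d, ε, hε, hd₀, hd, hr⟩ := ih h
    refine ⟨fun i ↦ Nat.casesOn i r₀ r,
      fun i ↦ Nat.casesOn i ((LinearMap.ker f).subtype ∘ₗ ε) d, f, hf, ?_, ?_, ?_⟩
    · change LinearMap.range ((LinearMap.ker f).subtype ∘ₗ ε) = _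
      rw [LinearMap.range_comp_of_range_eq_top _ (LinearMap.range_eq_top.2 hε),
        Submodule.range_subtype]
    · rintro (_ | i)
      · change LinearMap.range (d 0) = LinearMap.ker ((LinearMap.ker f).subtype ∘ₗ ε)
        rw [LinearMap.ker_comp_of_ker_eq_bot _ (Submodule.ker_subtype _), hd₀]
      · exact hd i
    · rintro (_ | i) hi
      · omega
      · exact hr i (by omega)

end HasFiniteFreeResolution

theorem finite_comap_of_injective {R M N : Type*} [Ring R] [IsNoetherianRing R]
    [AddCommGroup M] [Module R M] [AddCommGroup N] [Module R N] {f : M →ₗ[R] N}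
    (hf : Function.Injective f) (p : Submodule R N) [Module.Finite R p] :
    Module.Finite R (p.comap f) :=
  .of_injective (f.restrict (q := p) fun _ hv ↦ hv) fun _ _ hvw ↦
    Subtype.ext (hf (congrArg Subtype.val hvw))

section TensorCoeff

variable {R M N : Type*} [CommRing R] [AddCommGroup M] [Module R M] [AddCommGroup N] [Module R N]

variable (R M) in
/-- Elements of `R[X] ⊗ M`, viewed as polynomials with coefficients in `M`, so that identities
in `R[X] ⊗ M` can be checked coefficientwise. -/
noncomputable def tensorCoeff : R[X] ⊗[R] M ≃ₗ[R] ℕ →₀ M :=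
  TensorProduct.equivFinsuppOfBasisLeft (Polynomial.basisMonomials R)

theorem tensorCoeff_tmul (p : R[X]) (m : M) (i : ℕ) :
    tensorCoeff R M (p ⊗ₜ m) i = p.coeff i • m := by
  rw [tensorCoeff, TensorProduct.equivFinsuppOfBasisLeft_apply_tmul_apply]
  rfl

theorem tensorCoeff_baseChange (f : M →ₗ[R] N) (t : R[X] ⊗[R] M) (i : ℕ) :
    tensorCoeff R N (f.baseChange R[X] t) i = f (tensorCoeff R M t i) := by
  induction t with
  | zero => simp
  | tmul p m => simp [tensorCoeff_tmul]
  | add x y hx hy => simp [hx, hy]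

theorem tensorCoeff_X_smul_zero (t : R[X] ⊗[R] M) :
    tensorCoeff R M ((Polynomial.X : R[X]) • t) 0 = 0 := by
  induction t with
  | zero => simp
  | tmul p m => simp [TensorProduct.smul_tmul', tensorCoeff_tmul]
  | add x y hx hy => simp [smul_add, hx, hy]

theorem tensorCoeff_X_smul_succ (t : R[X] ⊗[R] M) (i : ℕ) :
    tensorCoeff R M ((Polynomial.X : R[X]) • t) (i + 1) = tensorCoeff R M t i := by
  induction t with
  | zero => simp
  | tmul p m => simp [TensorProduct.smul_tmul', tensorCoeff_tmul]
  | add x y hx hy => simp [smul_add, hx, hy]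

theorem exists_eq_sum_X_pow_tmul (t : R[X] ⊗[R] M) :
    ∃ (k : ℕ) (m : ℕ → M), t = ∑ i ∈ Finset.range k, (Polynomial.X ^ i : R[X]) ⊗ₜ m i := by
  obtain ⟨c, rfl⟩ := TensorProduct.eq_repr_basis_left (Polynomial.basisMonomials R) t
  obtain ⟨k, hk⟩ := c.support.exists_nat_subset_range
  refine ⟨k, c, ?_⟩
  rw [Finsupp.sum_of_support_subset _ hk _ (by simp)]
  simp [Polynomial.X_pow_eq_monomial]

theorem baseChange_X_smul_sub_injective {f g : M →ₗ[R] N} (hg : Function.Injective g) :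
    Function.Injective
      ((Polynomial.X : R[X]) • f.baseChange R[X] - g.baseChange R[X]) := by
  refine (injective_iff_map_eq_zero _).2 fun t ht ↦ ?_
  have h : (Polynomial.X : R[X]) • f.baseChange R[X] t = g.baseChange R[X] t := sub_eq_zero.1 ht
  refine (tensorCoeff R M).injective (Finsupp.ext fun i ↦ hg ?_)
  rw [← tensorCoeff_baseChange, ← h, map_zero, Finsupp.zero_apply, map_zero]
  induction i with
  | zero => exact tensorCoeff_X_smul_zero _
  | succ i ih =>
    have hi : tensorCoeff R M t i = 0 := hg <| by rw [← tensorCoeff_baseChange, ← h, ih, map_zero]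
    rw [tensorCoeff_X_smul_succ, tensorCoeff_baseChange, hi, map_zero]

end TensorCoeff

/-- A filtration of an `R[X]`-module behaving like the filtration of `R[X]ʳ` by the submodules
`F d` of elements of degree `< d`; in particular `F 0 = 0`. -/
structure IsDegreeFiltration {R V : Type*} [CommRing R] [AddCommGroup V] [Module R V]
    [Module R[X] V] (F : ℕ → Submodule R V) : Prop where
  mono : Monotone F
  zero_eq_bot : F 0 = ⊥
  exists_mem : ∀ v, ∃ d, v ∈ F d
  X_smul_mem_iff : ∀ {d v}, (Polynomial.X : R[X]) • v ∈ F (d + 1) ↔ v ∈ F d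

theorem isDegreeFiltration_pi_degreeLT (R ι : Type*) [CommRing R] [Finite ι] :
    IsDegreeFiltration fun d ↦ Submodule.pi Set.univ fun _ : ι ↦ Polynomial.degreeLT R d where
  mono _ _ hde := Submodule.pi_mono fun _ _ ↦ Polynomial.degreeLT_mono hde
  zero_eq_bot := by
    ext v
    simp [Submodule.mem_pi, Polynomial.mem_degreeLT, funext_iff]
  exists_mem v := by
    obtain ⟨d, hd⟩ := (Set.finite_range fun i ↦ (v i).natDegree).bddAbove
    refine ⟨d + 1, fun i _ ↦ Polynomial.mem_degreeLT.2 ?_⟩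
    exact Polynomial.degree_le_natDegree.trans_lt
      (by exact_mod_cast Nat.lt_succ_of_le (hd ⟨i, rfl⟩))
  X_smul_mem_iff {d v} := by
    simp only [Submodule.mem_pi, Polynomial.mem_degreeLT, Polynomial.degree_lt_iff_coeff_zero]
    refine forall₂_congr fun i _ ↦ ⟨fun h n hn ↦ ?_, fun h n hn ↦ ?_⟩
    · simpa using h (n + 1) (by omega)
    · obtain ⟨n, rfl⟩ := Nat.exists_eq_add_of_le' (show 1 ≤ n by omega)
      simpa using h n (by omega)

theorem finite_pi_degreeLT (R ι : Type*) [CommRing R] [Finite ι] (d : ℕ) :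
    Module.Finite R (Submodule.pi Set.univ fun _ : ι ↦ Polynomial.degreeLT R d) :=
  have := Module.Finite.equiv (Polynomial.degreeLTEquiv R d).symm
  Module.Finite.iff_fg.2 (Submodule.fg_pi fun _ ↦ Module.Finite.iff_fg.1 this)

namespace IsDegreeFiltration

variable {R V : Type*} [CommRing R] [AddCommGroup V] [Module R V] [Module R[X] V]
  {F : ℕ → Submodule R V} {d : ℕ}

theorem X_pow_smul_mem_iff (hF : IsDegreeFiltration F) {v : V} (k : ℕ) :
    (Polynomial.X ^ k : R[X]) • v ∈ F (d + k) ↔ v ∈ F d := by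
  induction k with
  | zero => simp
  | succ k ih => rw [pow_succ', mul_smul, ← add_assoc, hF.X_smul_mem_iff, ih]

theorem exists_span_eq_top [Module.Finite R[X] V] (hF : IsDegreeFiltration F) :
    ∃ d, Submodule.span R[X] (F (d + 1) : Set V) = ⊤ := by
  obtain ⟨s, hs⟩ := Module.Finite.fg_top (R := R[X]) (M := V)
  choose e he using hF.exists_mem
  refine ⟨s.sup e, eq_top_iff.2 (hs.ge.trans (Submodule.span_mono fun v hv ↦ ?_))⟩
  exact hF.mono ((Finset.le_sup hv).trans (Nat.le_succ _)) (he v)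

variable [IsScalarTower R R[X] V]

theorem comap_subtype (hF : IsDegreeFiltration F) (K : Submodule R[X] V) :
    IsDegreeFiltration fun d ↦ (F d).comap (K.subtype.restrictScalars R) where
  mono _ _ hde := Submodule.comap_mono (hF.mono hde)
  zero_eq_bot := by
    rw [hF.zero_eq_bot]
    exact LinearMap.ker_eq_bot.2 K.subtype_injective
  exists_mem v := hF.exists_mem v
  X_smul_mem_iff := hF.X_smul_mem_iff

/-- Multiplication by `X` as a map `F d → F (d + 1)`. -/
noncomputable def mulX (hF : IsDegreeFiltration F) (d : ℕ) : F d →ₗ[R] F (d + 1) :=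
  (Algebra.lsmul R R V (Polynomial.X : R[X])).restrict fun _ ↦ hF.X_smul_mem_iff.2

theorem coe_mulX (hF : IsDegreeFiltration F) (v : F d) :
    (hF.mulX d v : V) = (Polynomial.X : R[X]) • (v : V) := rfl

/-- The map `R[X] ⊗ F d → R[X] ⊗ F (d + 1)`, `p ⊗ v ↦ X p ⊗ v - p ⊗ X v`, recording the
relations between elements of `F (d + 1)` that come from the action of `X`. -/
noncomputable def relation (hF : IsDegreeFiltration F) (d : ℕ) :
    R[X] ⊗[R] F d →ₗ[R[X]] R[X] ⊗[R] F (d + 1) :=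
  (Polynomial.X : R[X]) • (Submodule.inclusion (hF.mono d.le_succ)).baseChange R[X] -
    (hF.mulX d).baseChange R[X]

theorem relation_tmul (hF : IsDegreeFiltration F) (p : R[X]) (v : F d) :
    hF.relation d (p ⊗ₜ v) =
      (Polynomial.X * p) ⊗ₜ Submodule.inclusion (hF.mono d.le_succ) v - p ⊗ₜ hF.mulX d v := by
  simp [relation, TensorProduct.smul_tmul']

theorem mulX_injective (hF : IsDegreeFiltration F) : Function.Injective (hF.mulX d) := by
  refine (injective_iff_map_eq_zero _).2 fun v hv ↦ Subtype.ext ?_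
  have hXv : (Polynomial.X : R[X]) • (v : V) = 0 := congrArg Subtype.val hv
  have hv₀ : (v : V) ∈ F 0 := hF.X_smul_mem_iff.1 (hXv ▸ zero_mem _)
  simpa [hF.zero_eq_bot] using hv₀

theorem relation_injective (hF : IsDegreeFiltration F) : Function.Injective (hF.relation d) :=
  baseChange_X_smul_sub_injective hF.mulX_injective

/-- A relation `∑ Xⁱ mᵢ = 0` among elements of `F (d + 1)` forces its leading coefficient `b` into
`F d`, so modulo the range of `relation` the leading term `Xᵏ⁺¹ ⊗ b` becomes `Xᵏ ⊗ X b`. -/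
theorem sum_X_pow_tmul_mem_range (hF : IsDegreeFiltration F) (k : ℕ) (m : ℕ → F (d + 1))
    (b : F (d + 1))
    (h : ∑ i ∈ Finset.range k, (Polynomial.X ^ i : R[X]) • (m i : V) +
      (Polynomial.X ^ k : R[X]) • (b : V) = 0) :
    ∑ i ∈ Finset.range k, (Polynomial.X ^ i : R[X]) ⊗ₜ[R] m i +
      (Polynomial.X ^ k : R[X]) ⊗ₜ[R] b ∈ LinearMap.range (hF.relation d) := by
  induction k generalizing b with
  | zero =>
    have hb : b = 0 := Subtype.ext (by simpa using h)
    simp [hb]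
  | succ k ih =>
    have hb : (b : V) ∈ F d := by
      refine (hF.X_pow_smul_mem_iff (k + 1)).1 ?_
      rw [eq_neg_of_add_eq_zero_right h]
      refine neg_mem (sum_mem fun i hi ↦ ?_)
      have hik : d + 1 + i ≤ d + (k + 1) := by
        have := Finset.mem_range.1 hi
        omega
      exact hF.mono hik ((hF.X_pow_smul_mem_iff i).2 (m i).2)
    obtain ⟨t, ht⟩ := ih (m k + hF.mulX d ⟨b, hb⟩) (by
      rw [← h, Finset.sum_range_succ, pow_succ]
      simp [coe_mulX, smul_add, mul_smul, add_assoc])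
    have hincl : Submodule.inclusion (hF.mono d.le_succ) ⟨b, hb⟩ = b := rfl
    refine ⟨t + (Polynomial.X ^ k) ⊗ₜ ⟨b, hb⟩, ?_⟩
    rw [map_add, ht, relation_tmul, hincl, Finset.sum_range_succ, TensorProduct.tmul_add,
      ← pow_succ']
    abel

theorem relation_exact (hF : IsDegreeFiltration F) :
    Function.Exact (hF.relation d) ((F (d + 1)).subtype.liftBaseChange R[X]) := by
  intro t
  constructor
  · intro ht
    obtain ⟨k, m, rfl⟩ := exists_eq_sum_X_pow_tmul t
    simpa using hF.sum_X_pow_tmul_mem_range k m 0 (by simpa using ht)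
  · rintro ⟨t, rfl⟩
    induction t with
    | zero => simp
    | tmul p v => simp [relation_tmul, coe_mulX, smul_smul, mul_comm]
    | add x y hx hy => rw [map_add, map_add, hx, hy, add_zero]

end IsDegreeFiltration

/-- The condition that every finite module has a finite resolution by finite free modules, of a
length that may depend on the module; it is what Hilbert's syzygy theorem carries from `R` to
`R[X]`. -/
def FiniteModulesHaveResolutions (R : Type u) [CommRing R] : Prop :=
  ∀ (M : Type u) [AddCommGroup M] [Module R M] [Module.Finite R M],
    ∃ n, HasFiniteFreeResolution R n M

theorem IsDegreeFiltration.exists_hasFiniteFreeResolution {R V : Type u} [CommRing R]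
    [AddCommGroup V] [Module R V] [Module R[X] V] [IsScalarTower R R[X] V] [Module.Finite R[X] V]
    {F : ℕ → Submodule R V} (hF : IsDegreeFiltration F) (hfin : ∀ d, Module.Finite R (F d))
    (hR : FiniteModulesHaveResolutions R) : ∃ n, HasFiniteFreeResolution R[X] n V := by
  obtain ⟨d, hd⟩ := hF.exists_span_eq_top
  obtain ⟨m, hm⟩ := hR (F d)
  obtain ⟨n, hn⟩ := hR (F (d + 1))
  have hsurj : Function.Surjective ((F (d + 1)).subtype.liftBaseChange R[X]) := by
    rw [← LinearMap.range_eq_top, LinearMap.range_liftBaseChange]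
    simpa using hd
  exact ⟨max m n + 1, .of_cokernel hF.relation_injective hF.relation_exact hsurj
    (hm.baseChange.mono (le_max_left m n)) (hn.baseChange.mono (le_max_right m n))⟩

namespace FiniteModulesHaveResolutions

variable {R S σ : Type u} [CommRing R] [CommRing S]

theorem of_isPrincipalIdealRing [IsDomain R] [IsPrincipalIdealRing R] :
    FiniteModulesHaveResolutions R := by
  intro M _ _ _
  obtain ⟨r, f, hf⟩ := Module.Finite.exists_fin' R M
  exact ⟨2, r, f, hf, .of_free⟩

theorem of_ringEquiv (e : R ≃+* S) (h : FiniteModulesHaveResolutions R) :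
    FiniteModulesHaveResolutions S := by
  intro M _ _ _
  let : Algebra R S := e.toRingHom.toAlgebra
  let : Module R M := Module.compHom M e.toRingHom
  have : IsScalarTower R S M := ⟨fun a s m ↦ mul_smul (e a) s m⟩
  have hsurj : Function.Surjective (algebraMap R S) := e.surjective
  have : Module.Finite R S := .of_surjective (Algebra.linearMap R S) hsurj
  have : Module.Finite R M := .trans S M
  have : Module.Flat R S := RingHom.Flat.of_bijective e.bijective
  have : TensorProduct.CompatibleSMul R S S M := .of_algebraMap_surjective S M hsurj
  obtain ⟨n, hn⟩ := h M
  exact ⟨n, hn.baseChange.of_linearEquiv (TensorProduct.lidOfCompatibleSMul R S M)⟩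

theorem isNoetherianRing (h : FiniteModulesHaveResolutions R) : IsNoetherianRing R := by
  refine (isNoetherianRing_iff_ideal_fg R).2 fun I ↦ ?_
  obtain ⟨n, hn⟩ := h (R ⧸ I)
  have := hn.finitePresentation
  have hI := Module.FinitePresentation.fg_ker I.mkQ I.mkQ_surjective
  rwa [Submodule.ker_mkQ] at hI

theorem polynomial (h : FiniteModulesHaveResolutions R) : FiniteModulesHaveResolutions R[X] := by
  intro M _ _ _
  have := h.isNoetherianRing
  obtain ⟨r, f, hf⟩ := Module.Finite.exists_fin' R[X] M
  have hF := (isDegreeFiltration_pi_degreeLT R (Fin r)).comap_subtype (LinearMap.ker f)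
  have := finite_pi_degreeLT R (Fin r)
  obtain ⟨n, hn⟩ := hF.exists_hasFiniteFreeResolution
    (fun _ ↦ finite_comap_of_injective Subtype.val_injective _) h
  exact ⟨n + 1, r, f, hf, hn⟩

theorem mvPolynomial [Finite σ] (h : FiniteModulesHaveResolutions R) :
    FiniteModulesHaveResolutions (MvPolynomial σ R) := by
  induction σ using Finite.induction_empty_option with
  | of_equiv e ih => exact ih.of_ringEquiv (renameEquiv R e).toRingEquiv
  | h_empty => exact h.of_ringEquiv (isEmptyAlgEquiv R PEmpty).symm.toRingEquiv
  | h_option ih => exact ih.polynomial.of_ringEquiv (optionEquivLeft R _).symm.toRingEquiv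

end FiniteModulesHaveResolutions

theorem flat_supported {R σ : Type*} [CommRing R] (s : Set σ) :
    Module.Flat (supported R s) (MvPolynomial σ R) := by
  classical
  let e : MvPolynomial σ R ≃ₐ[R] MvPolynomial (sᶜ : Set σ) (MvPolynomial s R) :=
    (renameEquiv R ((Equiv.sumComm _ _).trans (Equiv.Set.sumCompl s)).symm).trans
      (sumAlgEquiv R _ _)
  let e' : MvPolynomial s R ≃ₐ[R] supported R s := (supportedEquivMvPolynomial s).symm
  have he : e.toAlgHom.comp ((supported R s).val.comp e'.toAlgHom) =
      IsScalarTower.toAlgHom R (MvPolynomial s R) _ := by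
    ext1 i
    simp [e, e']
  have hmap : algebraMap (supported R s) (MvPolynomial σ R) =
      (e.symm.toAlgHom.toRingHom.comp C).comp e'.symm.toAlgHom.toRingHom := by
    refine RingHom.ext fun p ↦ e.injective ?_
    simpa using AlgHom.congr_fun he (e'.symm p)
  have hC : (C : MvPolynomial s R →+* MvPolynomial (sᶜ : Set σ) (MvPolynomial s R)).Flat :=
    RingHom.flat_algebraMap_iff.2 inferInstance
  rw [← RingHom.flat_algebraMap_iff, hmap]
  exact (RingHom.Flat.of_bijective e'.symm.bijective).comp
    (hC.comp (.of_bijective e.symm.bijective))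

theorem FiniteModulesHaveResolutions.exists_hasFiniteFreeResolution_span {R S : Type u} [CommRing R]
    [CommRing S] [Algebra R S] [Module.Flat R S] (h : FiniteModulesHaveResolutions R) {r : ℕ}
    {t : Set (Fin r → R)} (ht : t.Finite) :
    ∃ n, HasFiniteFreeResolution S n
      (Submodule.span S ((fun v i ↦ algebraMap R S (v i)) '' t)) := by
  have := Module.Finite.span_of_finite R ht
  obtain ⟨n, hn⟩ := h (Submodule.span R t)
  let e := TensorProduct.piScalarRight R S S (Fin r)
  have hspan : ((Submodule.span R t).baseChange S).map e.toLinearMap =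
      Submodule.span S ((fun v i ↦ algebraMap R S (v i)) '' t) := by
    rw [Submodule.baseChange_span, Submodule.map_span, Set.image_image]
    simp [e, Algebra.smul_def]
  rw [← hspan]
  exact ⟨n, hn.baseChange.of_linearEquiv
    ((Submodule.toBaseChange.toLinearEquiv S _).trans (e.submoduleMap _))⟩

theorem exists_finset_span_algebraMap_supported {R σ ι : Type*} [CommRing R] [Finite ι]
    {K : Submodule (MvPolynomial σ R) (ι → MvPolynomial σ R)} (hK : K.FG) :
    ∃ (s : Finset σ) (t : Set (ι → supported R (s : Set σ))), t.Finite ∧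
      Submodule.span (MvPolynomial σ R) ((fun v i ↦ algebraMap _ _ (v i)) '' t) = K := by
  classical
  have := Fintype.ofFinite ι
  obtain ⟨t, rfl⟩ := hK
  let s : Finset σ := t.biUnion fun v ↦ Finset.univ.biUnion fun i ↦ (v i).vars
  let φ (v : ι → supported R (s : Set σ)) (i : ι) : MvPolynomial σ R := algebraMap _ _ (v i)
  have hφ : Function.Injective φ := fun v w h ↦ funext fun i ↦ Subtype.ext (congrFun h i)
  have ht : (t : Set (ι → MvPolynomial σ R)) ⊆ Set.range φ := by
    intro v hv
    have hvs (i : ι) : v i ∈ supported R (s : Set σ) := mem_supported.2 fun x hx ↦ by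
      simp only [s, Finset.coe_biUnion, Set.mem_iUnion]
      exact ⟨v, hv, i, Finset.mem_univ i, hx⟩
    exact ⟨fun i ↦ ⟨v i, hvs i⟩, rfl⟩
  exact ⟨s, φ ⁻¹' t, t.finite_toSet.preimage hφ.injOn, by rw [Set.image_preimage_eq_of_subset ht]⟩

theorem FiniteModulesHaveResolutions.mvPolynomial_of_finitePresentation {R σ N : Type u}
    [CommRing R] (h : FiniteModulesHaveResolutions R) [AddCommGroup N]
    [Module (MvPolynomial σ R) N] [Module.FinitePresentation (MvPolynomial σ R) N] :
    ∃ n, HasFiniteFreeResolution (MvPolynomial σ R) (n + 1) N := by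
  obtain ⟨r, f, hf⟩ := Module.Finite.exists_fin' (MvPolynomial σ R) N
  obtain ⟨s, t, ht, hspan⟩ :=
    exists_finset_span_algebraMap_supported (Module.FinitePresentation.fg_ker f hf)
  have := flat_supported (R := R) (s : Set σ)
  have hs : FiniteModulesHaveResolutions (supported R (s : Set σ)) :=
    h.mvPolynomial.of_ringEquiv (supportedEquivMvPolynomial (s : Set σ)).symm.toRingEquiv
  obtain ⟨n, hn⟩ := hs.exists_hasFiniteFreeResolution_span (S := MvPolynomial σ R) ht
  exact ⟨n, r, f, hf, hspan ▸ hn⟩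

theorem finitePresentation_has_finite_free_resolution_general {R σ : Type u} [CommRing R]
    (hR : FiniteModulesHaveResolutions R) (N : Type u) [AddCommGroup N]
    [Module (MvPolynomial σ R) N] [Module.FinitePresentation (MvPolynomial σ R) N] :
    ∃ (n : ℕ) (r : ℕ → ℕ)
      (d : ∀ i : ℕ, ((Fin (r (i + 1)) → MvPolynomial σ R) →ₗ[MvPolynomial σ R]
        (Fin (r i) → MvPolynomial σ R)))
      (ε : (Fin (r 0) → MvPolynomial σ R) →ₗ[MvPolynomial σ R] N),
      Function.Surjective ε ∧
      LinearMap.range (d 0) = LinearMap.ker ε ∧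
      (∀ i : ℕ, LinearMap.range (d (i + 1)) = LinearMap.ker (d i)) ∧
      (∀ i : ℕ, n < i → r i = 0) := by
  obtain ⟨n, hn⟩ := hR.mvPolynomial_of_finitePresentation (σ := σ) (N := N)
  exact ⟨n, hn.exists_complex⟩

/-- Every finitely presented module `N` over
`A = ℂ[X₁, X₂, …] = MvPolynomial ℕ ℂ` admits a finite resolution by finite
rank free `A`-modules: there are `n`, ranks `r i` (with `r i = 0` for `i > n`),
maps `d i : A^{r (i+1)} → A^{r i}` and `ε : A^{r 0} → N` forming an exact
sequence `0 → Fₙ → ⋯ → F₀ → N → 0`. -/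
theorem finitePresentation_has_finite_free_resolution
    (N : Type) [AddCommGroup N] [Module (MvPolynomial ℕ ℂ) N]
    [Module.FinitePresentation (MvPolynomial ℕ ℂ) N] :
    ∃ (n : ℕ) (r : ℕ → ℕ)
      (d : ∀ i : ℕ, ((Fin (r (i + 1)) → MvPolynomial ℕ ℂ) →ₗ[MvPolynomial ℕ ℂ]
        (Fin (r i) → MvPolynomial ℕ ℂ)))
      (ε : (Fin (r 0) → MvPolynomial ℕ ℂ) →ₗ[MvPolynomial ℕ ℂ] N),
      Function.Surjective ε ∧
      LinearMap.range (d 0) = LinearMap.ker ε ∧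
      (∀ i : ℕ, LinearMap.range (d (i + 1)) = LinearMap.ker (d i)) ∧
      (∀ i : ℕ, n < i → r i = 0) :=
  finitePresentation_has_finite_free_resolution_general .of_isPrincipalIdealRing N
end

section
/- Let A = ℂ[X₁, X₂, X₃, …] be the polynomial algebra over ℂ in countably infinitely many variables, and let M and N be finitely presented A-modules. Then for every i ≥ 0 the A-module Tor_i^A(M, N) is finitely presented, and Tor_i^A(M, N) = 0 for all sufficiently large i. -/
open CategoryTheory

/-!
Write `A = R[X_s : s ∈ σ]` with `R` Noetherian of finite global dimension. A presentation matrix of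
a finitely presented `A`-module `N` involves only finitely many variables, so it has entries in a
polynomial ring `A₀ ⊆ A` in finitely many variables, over which `A` is flat. Flat base change
transports two properties of `A₀` to `A`. Since `A₀` is Noetherian, kernels of matrices over `A`
are finitely generated, that is, `A` is coherent. Since `A₀` has finite global dimension (Hilbert's
syzygy theorem), `N` has finite projective dimension.

The syzygy theorem follows by induction from the characteristic sequence
`0 → R[X] ⊗ M → R[X] ⊗ M → M → 0` of an `R[X]`-module `M`, whose first map is `X ⊗ 1 - 1 ⊗ X`.

Hence `N` has a finite resolution `P` by finitely generated projective modules, and over a coherent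
ring the homology of `M ⊗ P` is finitely presented.
-/

open TensorProduct

universe u

/-- A commutative ring is coherent if its finitely generated ideals are finitely presented. We
encode the equivalent condition that linear maps between finite free modules have finitely
generated kernels. -/
class IsCoherentRing (A : Type*) [CommRing A] : Prop where
  fg_ker_pi (m n : ℕ) (f : (Fin m → A) →ₗ[A] (Fin n → A)) : (LinearMap.ker f).FG

namespace IsCoherentRing

variable {A : Type u} [CommRing A] [IsCoherentRing A]

theorem finitePresentation_of_fg_pi {n : ℕ} {K : Submodule A (Fin n → A)} (hK : K.FG) :
    Module.FinitePresentation A K := by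
  obtain ⟨m, g, rfl⟩ := K.fg_iff_exists_fin_linearMap.mp hK
  refine Module.finitePresentation_of_surjective g.rangeRestrict g.surjective_rangeRestrict ?_
  rw [LinearMap.ker_rangeRestrict]
  exact fg_ker_pi m n g

theorem finitePresentation_of_fg {N : Type*} [AddCommGroup N] [Module A N]
    [Module.FinitePresentation A N] {K : Submodule A N} (hK : K.FG) :
    Module.FinitePresentation A K := by
  obtain ⟨n, f, hf⟩ := Module.Finite.exists_fin' A N
  have hker : (LinearMap.ker f).FG := Module.FinitePresentation.fg_ker f hf
  have hle : LinearMap.ker f ≤ K.comap f := LinearMap.ker_le_comap f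
  have hcomap : (K.comap f).FG := by
    refine Submodule.fg_of_fg_map_of_fg_inf_ker f ?_ ?_
    · rwa [Submodule.map_comap_eq_of_surjective hf]
    · rwa [inf_eq_right.mpr hle]
  have := finitePresentation_of_fg_pi hcomap
  refine Module.finitePresentation_of_surjective (f.submoduleComap K)
    (f.submoduleComap_surjective_of_surjective K hf) ?_
  rw [LinearMap.submoduleComap, LinearMap.ker_restrict]
  have : Module.Finite A (LinearMap.ker f) := .of_fg hker
  exact Module.Finite.iff_fg.mp (.equiv (Submodule.submoduleOfEquivOfLe hle).symm)

theorem finitePresentation_ker {M N : Type*} [AddCommGroup M] [Module A M] [AddCommGroup N]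
    [Module A N] [Module.FinitePresentation A M] [Module.FinitePresentation A N]
    (f : M →ₗ[A] N) : Module.FinitePresentation A (LinearMap.ker f) := by
  have : Module.FinitePresentation A (LinearMap.range f) := finitePresentation_of_fg .of_finite
  refine finitePresentation_of_fg ?_
  rw [← LinearMap.ker_rangeRestrict]
  exact Module.FinitePresentation.fg_ker _ f.surjective_rangeRestrict

theorem finitePresentation_homology (S : ShortComplex (ModuleCat.{u} A))
    [Module.FinitePresentation A S.X₁] [Module.FinitePresentation A S.X₂]
    [Module.FinitePresentation A S.X₃] : Module.FinitePresentation A S.homology := by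
  have := finitePresentation_ker S.g.hom
  have : Module.FinitePresentation A
      (LinearMap.ker S.g.hom ⧸ LinearMap.range S.moduleCatToCycles) := by
    refine Module.finitePresentation_of_surjective (Submodule.mkQ _)
      (Submodule.mkQ_surjective _) ?_
    rw [Submodule.ker_mkQ]
    exact .of_finite
  have : Module.FinitePresentation A S.moduleCatLeftHomologyData.H := this
  exact .of_equiv S.moduleCatHomologyIso.toLinearEquiv.symm

end IsCoherentRing

section BaseChange

variable {R S : Type u} [CommRing R] [CommRing S] [Algebra R S] [Module.Flat R S]

theorem hasProjectiveDimensionLE_baseChange (n : ℕ) (M : ModuleCat.{u} R)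
    [hM : HasProjectiveDimensionLE M n] :
    HasProjectiveDimensionLE (ModuleCat.of S (S ⊗[R] M)) n := by
  induction n generalizing M with
  | zero =>
    rw [← projective_iff_hasProjectiveDimensionLE_zero, ← IsProjective.iff_projective] at hM ⊢
    infer_instance
  | succ n ih =>
    obtain ⟨F, _, _, _, g, hg⟩ : ∃ (F : Type u) (_ : AddCommGroup F) (_ : Module R F)
        (_ : Module.Free R F) (g : F →ₗ[R] M), Function.Surjective g :=
      ⟨M →₀ R, _, _, inferInstance, _, Finsupp.linearCombination_id_surjective R M⟩
    have hF : Projective (ModuleCat.of R F) := (IsProjective.iff_projective _).mp inferInstance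
    have hSF : Projective (ModuleCat.of S (S ⊗[R] F)) :=
      (IsProjective.iff_projective _).mp inferInstance
    have hexact : Function.Exact ((LinearMap.ker g).subtype.baseChange S) (g.baseChange S) :=
      lTensor_exact S g.exact_subtype_ker_map hg
    have hker : HasProjectiveDimensionLE (ModuleCat.of R (LinearMap.ker g)) n :=
      ((LinearMap.shortExact_shortComplexKer hg).hasProjectiveDimensionLT_X₃_iff n hF).mp hM
    have hbase := ModuleCat.shortComplex_shortExact
      (ModuleCat.shortComplexOfCompEqZero _ _ hexact.linearMap_comp_eq_zero) hexact
      (Module.Flat.lTensor_preserves_injective_linearMap _ (LinearMap.ker g).injective_subtype)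
      (LinearMap.lTensor_surjective S hg)
    exact (hbase.hasProjectiveDimensionLT_X₃_iff n hSF).mpr (ih (.of R (LinearMap.ker g)))

end BaseChange

namespace CharacteristicSequence

open Polynomial

variable (R M : Type*) [CommRing R] [AddCommGroup M] [Module R M] [Module R[X] M]
  [IsScalarTower R R[X] M]

/-- The endomorphism `X ⊗ 1 - 1 ⊗ X` of `R[X] ⊗[R] M`, for an `R[X]`-module `M`. -/
noncomputable def subX : R[X] ⊗[R] M →ₗ[R[X]] R[X] ⊗[R] M :=
  Algebra.lsmul R R[X] _ (X : R[X]) - (Algebra.lsmul R R M (X : R[X])).baseChange R[X]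

/-- The scalar multiplication map `R[X] ⊗[R] M → M`. -/
noncomputable def action : R[X] ⊗[R] M →ₗ[R[X]] M :=
  LinearMap.liftBaseChange R[X] (LinearMap.id : M →ₗ[R] M)

/-- The divided difference `(Xⁿ ⊗ 1 - 1 ⊗ Xⁿ) / (X ⊗ 1 - 1 ⊗ X)`, applied to `1 ⊗ m`. -/
noncomputable def dividedDifference : ℕ → M →ₗ[R] R[X] ⊗[R] M
  | 0 => 0
  | n + 1 => TensorProduct.mk R R[X] M (X ^ n) +
      dividedDifference n ∘ₗ Algebra.lsmul R R M (X : R[X])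

/-- The contracting homotopy of `R[X] ⊗[R] M → R[X] ⊗[R] M → M → 0` given by
`a Xⁿ ⊗ m ↦ a • (Xⁿ ⊗ 1 - 1 ⊗ Xⁿ) / (X ⊗ 1 - 1 ⊗ X) (1 ⊗ m)`. Together with `m ↦ 1 ⊗ m` it splits
the sequence over `R`. -/
noncomputable def homotopy : R[X] ⊗[R] M →ₗ[R] R[X] ⊗[R] M :=
  TensorProduct.lift <| Polynomial.lsum fun n ↦
    LinearMap.toSpanSingleton R _ (dividedDifference R M n)

variable {R M}

@[simp]
theorem subX_tmul (p : R[X]) (m : M) :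
    subX R M (p ⊗ₜ m) = (X * p) ⊗ₜ m - p ⊗ₜ ((X : R[X]) • m) := by
  simp [subX, smul_tmul']

@[simp]
theorem action_tmul (p : R[X]) (m : M) : action R M (p ⊗ₜ m) = p • m := by
  simp [action]

theorem dividedDifference_succ (n : ℕ) (m : M) :
    dividedDifference R M (n + 1) m =
      (X ^ n : R[X]) ⊗ₜ m + dividedDifference R M n ((X : R[X]) • m) :=
  rfl

@[simp]
theorem homotopy_X_pow_tmul (n : ℕ) (m : M) :
    homotopy R M ((X ^ n) ⊗ₜ m) = dividedDifference R M n m := by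
  simp [homotopy, ← monomial_one_right_eq_X_pow]

theorem subX_dividedDifference (n : ℕ) (m : M) :
    subX R M (dividedDifference R M n m) = (X ^ n) ⊗ₜ m - 1 ⊗ₜ ((X ^ n : R[X]) • m) := by
  induction n generalizing m with
  | zero => simp [dividedDifference]
  | succ n ih =>
    rw [dividedDifference_succ, map_add, subX_tmul, ih, smul_smul, ← pow_succ', ← pow_succ,
      sub_add_sub_cancel]

theorem homotopy_comp_subX :
    homotopy R M ∘ₗ (subX R M).restrictScalars R = LinearMap.id := by
  ext n m
  simp [monomial_one_right_eq_X_pow, ← pow_succ', dividedDifference_succ]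

theorem subX_homotopy (z : R[X] ⊗[R] M) :
    subX R M (homotopy R M z) = z - 1 ⊗ₜ action R M z := by
  suffices h : (subX R M).restrictScalars R ∘ₗ homotopy R M =
      LinearMap.id - TensorProduct.mk R R[X] M 1 ∘ₗ (action R M).restrictScalars R from
    LinearMap.congr_fun h z
  ext n m
  simp [monomial_one_right_eq_X_pow, subX_dividedDifference]

theorem subX_injective : Function.Injective (subX R M) :=
  Function.LeftInverse.injective (LinearMap.congr_fun homotopy_comp_subX)

theorem action_comp_subX : action R M ∘ₗ subX R M = 0 := by
  ext m
  simp

theorem exact_subX_action : Function.Exact (subX R M) (action R M) :=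
  LinearMap.exact_of_comp_of_mem_range action_comp_subX fun z hz ↦
    ⟨homotopy R M z, by rw [subX_homotopy, hz, tmul_zero, sub_zero]⟩

theorem action_surjective : Function.Surjective (action R M) :=
  fun m ↦ ⟨1 ⊗ₜ m, by rw [action_tmul, one_smul]⟩

end CharacteristicSequence

/-- The global dimension of `R` is at most `d`, where modules range over the universe of `R`. -/
def HasGlobalDimensionLE (R : Type u) [Ring R] (d : ℕ) : Prop :=
  ∀ M : ModuleCat.{u} R, HasProjectiveDimensionLE M d

theorem hasGlobalDimensionLE_zero_of_divisionRing (k : Type u) [DivisionRing k] :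
    HasGlobalDimensionLE k 0 := fun V ↦ by
  rw [← projective_iff_hasProjectiveDimensionLE_zero, ← IsProjective.iff_projective]
  exact Module.Projective.of_free

namespace HasGlobalDimensionLE

variable {R : Type u} [CommRing R] {d : ℕ}

theorem of_ringEquiv {R R' : Type u} [Ring R] [Ring R'] (hR : HasGlobalDimensionLE R d)
    (e : R ≃+* R') : HasGlobalDimensionLE R' d := fun M ↦ by
  let _ : Module R M := Module.compHom M e.toRingHom
  have := hR (.of R M)
  let _ := RingHomInvPair.of_ringEquiv e
  let _ := RingHomInvPair.symm (RingHomClass.toRingHom e) (RingHomClass.toRingHom e.symm)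
  let e' : ModuleCat.of R M ≃ₛₗ[RingHomClass.toRingHom e] M :=
    { AddEquiv.refl M with map_smul' := fun _ _ ↦ rfl }
  exact ModuleCat.hasProjectiveDimensionLE_of_semiLinearEquiv e e' d

open Polynomial CharacteristicSequence in
theorem polynomial (hR : HasGlobalDimensionLE R d) : HasGlobalDimensionLE R[X] (d + 1) :=
  fun M ↦ by
  let _ : Module R M := Module.compHom M (C : R →+* R[X])
  have : IsScalarTower R R[X] M :=
    ⟨fun r p m ↦ by rw [Polynomial.smul_eq_C_mul, mul_smul]; rfl⟩
  have hS := ModuleCat.shortComplex_shortExact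
    (ModuleCat.shortComplexOfCompEqZero (subX R M) (action R M) action_comp_subX)
    exact_subX_action subX_injective action_surjective
  have := hR (.of R M)
  have : HasProjectiveDimensionLE (ModuleCat.of R[X] (R[X] ⊗[R] M)) d :=
    hasProjectiveDimensionLE_baseChange d (.of R M)
  exact hS.hasProjectiveDimensionLT_X₃ (d + 1) this
    (hasProjectiveDimensionLT_of_ge _ (d + 1) _ (Nat.le_succ _))

theorem mvPolynomial_fin (hR : HasGlobalDimensionLE R d) (n : ℕ) :
    HasGlobalDimensionLE (MvPolynomial (Fin n) R) (d + n) := by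
  induction n with
  | zero => exact hR.of_ringEquiv (MvPolynomial.isEmptyRingEquiv R (Fin 0)).symm
  | succ n ih => exact ih.polynomial.of_ringEquiv (MvPolynomial.finSuccEquiv R n).symm.toRingEquiv

theorem supported {σ : Type u} (hR : HasGlobalDimensionLE R d) (s : Finset σ) :
    HasGlobalDimensionLE (MvPolynomial.supported R (s : Set σ)) (d + s.card) :=
  (hR.mvPolynomial_fin s.card).of_ringEquiv
    ((MvPolynomial.renameEquiv R s.equivFin.symm).trans
      (MvPolynomial.supportedEquivMvPolynomial (s : Set σ)).symm).toRingEquiv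

end HasGlobalDimensionLE

theorem isNoetherianRing_supported {R σ : Type*} [CommRing R] [IsNoetherianRing R]
    (s : Finset σ) : IsNoetherianRing (MvPolynomial.supported R (s : Set σ)) :=
  isNoetherianRing_of_ringEquiv _
    (MvPolynomial.supportedEquivMvPolynomial (s : Set σ)).symm.toRingEquiv

open MvPolynomial in
theorem flat_rename_of_injective (R : Type*) [CommRing R] {σ τ : Type*} {f : σ → τ}
    (hf : Function.Injective f) : (rename (R := R) f).toRingHom.Flat := by
  classical
  let e : MvPolynomial ↥(Set.range f)ᶜ (MvPolynomial σ R) ≃ₐ[R] MvPolynomial τ R :=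
    (sumAlgEquiv R _ _).symm.trans (renameEquiv R ((Equiv.sumComm _ _).trans
      (((Equiv.ofInjective f hf).sumCongr (.refl _)).trans (Equiv.Set.sumCompl (Set.range f)))))
  have h : (rename (R := R) f).toRingHom = e.toRingEquiv.toRingHom.comp C := by
    ext i
    · simp [e]
    · simp [e]
  rw [h]
  exact .comp (RingHom.flat_algebraMap_iff.mpr inferInstance) (.of_bijective e.bijective)

open MvPolynomial in
instance flat_supported_s12 (R : Type*) {σ : Type*} [CommRing R] (s : Set σ) :
    Module.Flat (supported R s) (MvPolynomial σ R) := by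
  have hsymm : (supported R s).val.comp (supportedEquivMvPolynomial s).symm.toAlgHom =
      rename (R := R) ((↑) : s → σ) := by
    ext i
    simp
  have h : algebraMap (supported R s) (MvPolynomial σ R) =
      (rename (R := R) ((↑) : s → σ)).toRingHom.comp
        (supportedEquivMvPolynomial s).toRingEquiv.toRingHom := by
    ext1 p
    simpa using DFunLike.congr_fun hsymm (supportedEquivMvPolynomial s p)
  rw [← RingHom.flat_algebraMap_iff, h]
  exact .comp (.of_bijective (supportedEquivMvPolynomial s).bijective)
    (flat_rename_of_injective R Subtype.val_injective)

section Descent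

variable {R S ι κ : Type*} [CommRing R] [CommRing S] [Algebra R S] [Fintype κ]

theorem piScalarRight_comp_baseChange_mulVecLin [Fintype ι] [DecidableEq ι] [DecidableEq κ]
    (c : Matrix ι κ R) :
    (piScalarRight R S S ι).toLinearMap ∘ₗ c.mulVecLin.baseChange S =
      (c.map (algebraMap R S)).mulVecLin ∘ₗ (piScalarRight R S S κ).toLinearMap := by
  ext j i
  have h := (algebraMap R S).map_mulVec c (Pi.single j 1) i
  simpa [Algebra.smul_def, Function.comp_def] using h

theorem map_piScalarRight_range_baseChange_mulVecLin [Fintype ι] [DecidableEq ι]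
    (c : Matrix ι κ R) :
    (LinearMap.range (c.mulVecLin.baseChange S)).map (piScalarRight R S S ι).toLinearMap =
      LinearMap.range (c.map (algebraMap R S)).mulVecLin := by
  classical
  rw [← LinearMap.range_comp, piScalarRight_comp_baseChange_mulVecLin, LinearEquiv.range_comp]

theorem map_piScalarRight_ker_baseChange_mulVecLin [Finite ι] [DecidableEq κ]
    (c : Matrix ι κ R) :
    (LinearMap.ker (c.mulVecLin.baseChange S)).map (piScalarRight R S S κ).toLinearMap =
      LinearMap.ker (c.map (algebraMap R S)).mulVecLin := by
  classical
  cases nonempty_fintype ι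
  rw [← LinearEquiv.ker_comp (piScalarRight R S S ι), piScalarRight_comp_baseChange_mulVecLin,
    LinearMap.ker_comp, Submodule.map_comap_eq_of_surjective (piScalarRight R S S κ).surjective]

theorem fg_ker_mulVecLin_map [Finite ι] [IsNoetherianRing R] [Module.Flat R S] (c : Matrix ι κ R) :
    (LinearMap.ker (c.map (algebraMap R S)).mulVecLin).FG := by
  classical
  have hexact : Function.Exact ((LinearMap.ker c.mulVecLin).subtype.baseChange S)
      (c.mulVecLin.baseChange S) :=
    Module.Flat.lTensor_exact S c.mulVecLin.exact_subtype_ker_map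
  rw [← map_piScalarRight_ker_baseChange_mulVecLin, hexact.linearMap_ker_eq]
  exact .map _ .of_finite

/-- Base change commutes with passing to the cokernel of a matrix. -/
noncomputable def baseChangeCokerEquiv [Fintype ι] [DecidableEq ι] (c : Matrix ι κ R) :
    (S ⊗[R] ((ι → R) ⧸ LinearMap.range c.mulVecLin)) ≃ₗ[S]
      (ι → S) ⧸ LinearMap.range (c.map (algebraMap R S)).mulVecLin :=
  have hexact : Function.Exact (c.mulVecLin.baseChange S)
      ((LinearMap.range c.mulVecLin).mkQ.baseChange S) :=
    lTensor_exact S c.mulVecLin.exact_map_mkQ_range (Submodule.mkQ_surjective _)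
  (hexact.linearEquivOfSurjective
    (LinearMap.lTensor_surjective S (Submodule.mkQ_surjective _))).symm ≪≫ₗ
    Submodule.Quotient.equiv _ _ (piScalarRight R S S ι)
      (map_piScalarRight_range_baseChange_mulVecLin c)

theorem HasGlobalDimensionLE.hasProjectiveDimensionLE_of_exact {R S : Type u} [CommRing R]
    [CommRing S] [Algebra R S] [Module.Flat R S] {d : ℕ} (hR : HasGlobalDimensionLE R d)
    {ι : Type} {κ : Type*} [Finite ι] [Fintype κ]
    (c : Matrix ι κ R) {N : ModuleCat.{u} S} {f : (ι → S) →ₗ[S] N} (hf : Function.Surjective f)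
    (hcf : Function.Exact (c.map (algebraMap R S)).mulVecLin f) :
    HasProjectiveDimensionLE N d := by
  classical
  cases nonempty_fintype ι
  let Q := ModuleCat.of R ((ι → R) ⧸ LinearMap.range c.mulVecLin)
  have := hR Q
  have := hasProjectiveDimensionLE_baseChange (S := S) d Q
  exact hasProjectiveDimensionLT_of_iso
    (baseChangeCokerEquiv c ≪≫ₗ hcf.linearEquivOfSurjective hf).toModuleIso _

end Descent

section PolynomialRings

open MvPolynomial

theorem exists_finset_forall_mem_supported {R σ ι : Type*} [CommRing R] [Finite ι]
    (p : ι → MvPolynomial σ R) :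
    ∃ s : Finset σ, ∀ i, p i ∈ supported R (s : Set σ) := by
  classical
  cases nonempty_fintype ι
  refine ⟨Finset.univ.biUnion fun i ↦ (p i).vars, fun i ↦ ?_⟩
  rw [mem_supported, Finset.coe_subset]
  exact Finset.subset_biUnion_of_mem (fun i ↦ (p i).vars) (Finset.mem_univ i)

theorem exists_finset_matrix_supported {R σ ι κ : Type*} [CommRing R] [Finite ι] [Finite κ]
    (A : Matrix ι κ (MvPolynomial σ R)) :
    ∃ (s : Finset σ) (c : Matrix ι κ (supported R (s : Set σ))), c.map (algebraMap _ _) = A := by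
  obtain ⟨s, hs⟩ := exists_finset_forall_mem_supported fun p : ι × κ ↦ A p.1 p.2
  exact ⟨s, .of fun i j ↦ ⟨A i j, hs (i, j)⟩, rfl⟩

theorem exists_matrix_supported_of_linearMap {R σ ι κ : Type*} [CommRing R] [Finite ι]
    [Fintype κ] (f : (κ → MvPolynomial σ R) →ₗ[MvPolynomial σ R] (ι → MvPolynomial σ R)) :
    ∃ (s : Finset σ) (c : Matrix ι κ (supported R (s : Set σ))),
      (c.map (algebraMap _ (MvPolynomial σ R))).mulVecLin = f := by
  classical
  obtain ⟨s, c, hc⟩ := exists_finset_matrix_supported (LinearMap.toMatrix' f)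
  exact ⟨s, c, by rw [hc, ← Matrix.toLin'_apply', Matrix.toLin'_toMatrix']⟩

instance isCoherentRing_mvPolynomial {R σ : Type*} [CommRing R] [IsNoetherianRing R] :
    IsCoherentRing (MvPolynomial σ R) where
  fg_ker_pi m n f := by
    obtain ⟨s, c, rfl⟩ := exists_matrix_supported_of_linearMap f
    have := isNoetherianRing_supported (R := R) s
    exact fg_ker_mulVecLin_map c

theorem HasGlobalDimensionLE.exists_hasProjectiveDimensionLE_mvPolynomial {R σ : Type u}
    [CommRing R] {d : ℕ} (hR : HasGlobalDimensionLE R d) (N : ModuleCat.{u} (MvPolynomial σ R))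
    [Module.FinitePresentation (MvPolynomial σ R) N] :
    ∃ n : ℕ, HasProjectiveDimensionLE N n := by
  obtain ⟨n, m, f, g, hf, hgf⟩ := Module.FinitePresentation.exists_fin' (MvPolynomial σ R) N
  obtain ⟨s, c, rfl⟩ := exists_matrix_supported_of_linearMap g
  exact ⟨d + s.card, (hR.supported s).hasProjectiveDimensionLE_of_exact c hf hgf⟩

end PolynomialRings

section FiniteResolution

open Limits

section Abelian

variable {C : Type*} [Category* C] [Abelian C]

theorem exact_epi_comp {S : ShortComplex C} (hS : S.Exact) {P : C} (p : P ⟶ S.X₁) [Epi p] :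
    (ShortComplex.mk (p ≫ S.f) S.g (by simp)).Exact := by
  let φ : ShortComplex.mk (p ≫ S.f) S.g (by simp) ⟶ S := { τ₁ := p, τ₂ := 𝟙 _, τ₃ := 𝟙 _ }
  exact (ShortComplex.exact_iff_of_epi_of_isIso_of_mono φ).mpr hS

theorem exact_comp_mono {S : ShortComplex C} (hS : S.Exact) {Y : C} (i : S.X₃ ⟶ Y) [Mono i] :
    (ShortComplex.mk S.f (S.g ≫ i) (by simp)).Exact := by
  let φ : S ⟶ ShortComplex.mk S.f (S.g ≫ i) (by simp) := { τ₁ := 𝟙 _, τ₂ := 𝟙 _, τ₃ := i }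
  exact (ShortComplex.exact_iff_of_epi_of_isIso_of_mono φ).mp hS

theorem quasiIso_toSingle₀Equiv_symm {K : ChainComplex C ℕ} {X : C} (f : K.X 0 ⟶ X) (hf : Epi f)
    (w : K.d 1 0 ≫ f = 0) (h₀ : (ShortComplex.mk _ _ w).Exact)
    (h : ∀ n, (ShortComplex.mk _ _ (K.d_comp_d (n + 2) (n + 1) n)).Exact) :
    QuasiIso ((ChainComplex.toSingle₀Equiv K X).symm ⟨f, w⟩) where
  quasiIsoAt n := by
    rcases n with _ | n
    · have hπ := ChainComplex.toSingle₀Equiv_symm_apply_f_zero f w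
      rw [ChainComplex.quasiIsoAt₀_iff, ShortComplex.quasiIso_iff_of_zeros']
      · refine (ShortComplex.exact_and_epi_g_iff_of_iso (S₂ := .mk _ f w) ?_).mpr ⟨h₀, hf⟩
        exact ShortComplex.isoMk (Iso.refl _) (Iso.refl _) (Iso.refl _)
          ((Category.id_comp _).trans (Category.comp_id _).symm)
          ((Category.id_comp _).trans (hπ.symm.trans (Category.comp_id _).symm))
      exacts [K.shape _ _ (by simp), rfl, rfl]
    · rw [quasiIsoAt_iff_exactAt' _ _ (ChainComplex.exactAt_succ_single_obj ..),
        HomologicalComplex.exactAt_iff' _ (n + 2) (n + 1) n (by simp) (by simp)]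
      exact h n

/-- The augmentation of a projective resolution, as a map to the resolved object itself. -/
abbrev augmentation {X : C} (Q : ProjectiveResolution X) : Q.complex.X 0 ⟶ X :=
  Q.π.f 0

instance epi_augmentation {X : C} (Q : ProjectiveResolution X) : Epi (augmentation Q) :=
  inferInstanceAs (Epi (Q.π.f 0))

theorem complex_d_comp_augmentation {X : C} (Q : ProjectiveResolution X) :
    Q.complex.d 1 0 ≫ augmentation Q = 0 :=
  Q.complex_d_comp_π_f_zero

/-- The projective resolution of `S.X₃` obtained by splicing a short exact sequence `S` with
projective middle term and a projective resolution of `S.X₁`. -/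
noncomputable def spliceProjectiveResolution {S : ShortComplex C} (hS : S.ShortExact)
    [Projective S.X₂] (Q : ProjectiveResolution S.X₁) : ProjectiveResolution S.X₃ where
  complex := Q.complex.augment (augmentation Q ≫ S.f)
    (by rw [← Category.assoc, complex_d_comp_augmentation, zero_comp])
  projective
    | 0 => ‹Projective S.X₂›
    | n + 1 => Q.projective n
  π := (ChainComplex.toSingle₀Equiv _ _).symm
    ⟨S.g, show (augmentation Q ≫ S.f) ≫ S.g = 0 by simp⟩
  quasiIso := by
    have := hS.mono_f
    exact quasiIso_toSingle₀Equiv_symm (K := Q.complex.augment (augmentation Q ≫ S.f) _) S.g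
      hS.epi_g _ (exact_epi_comp hS.exact (augmentation Q)) fun
      | 0 => exact_comp_mono (S := .mk _ (augmentation Q) _) Q.exact₀ S.f
      | n + 1 => Q.exact_succ n

end Abelian

theorem exists_projectiveResolution_finite {A : Type u} [CommRing A] [IsCoherentRing A]
    (d : ℕ) (N : ModuleCat.{u} A) [Module.FinitePresentation A N]
    [hN : HasProjectiveDimensionLE N d] :
    ∃ P : ProjectiveResolution N, (∀ n, Module.Finite A (P.complex.X n)) ∧
      ∀ n, d < n → IsZero (P.complex.X n) := by
  induction d generalizing N with
  | zero =>
    have := (projective_iff_hasProjectiveDimensionLE_zero N).mpr hN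
    have hzero (n : ℕ) : IsZero ((ProjectiveResolution.self N).complex.X (n + 1)) :=
      HomologicalComplex.isZero_single_obj_X (.down ℕ) 0 N (n + 1) n.succ_ne_zero
    refine ⟨.self N, fun
      | 0 => inferInstanceAs (Module.Finite A N)
      | n + 1 => ?_, fun
      | n + 1, _ => hzero n⟩
    have := ModuleCat.subsingleton_of_isZero (hzero n)
    infer_instance
  | succ d ih =>
    obtain ⟨n, f, hf⟩ := Module.Finite.exists_fin' A N
    have hS := LinearMap.shortExact_shortComplexKer hf
    have hF : Projective (ModuleCat.of A (Fin n → A)) :=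
      (IsProjective.iff_projective _).mp inferInstance
    have : Module.FinitePresentation A (ModuleCat.of A (LinearMap.ker f)) :=
      IsCoherentRing.finitePresentation_ker f
    have := (hS.hasProjectiveDimensionLT_X₃_iff d hF).mp hN
    obtain ⟨Q, hQ, hQ₀⟩ := ih (ModuleCat.of A (LinearMap.ker f))
    exact ⟨spliceProjectiveResolution hS Q, fun
      | 0 => inferInstanceAs (Module.Finite A (Fin n → A))
      | i + 1 => hQ i, fun
      | i + 1, hi => hQ₀ i (Nat.lt_of_succ_lt_succ hi)⟩

end FiniteResolution

section Tor

theorem finitePresentation_tensorProduct {A : Type*} [CommRing A]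
    (M P : Type*) [AddCommGroup M] [Module A M] [AddCommGroup P] [Module A P]
    [Module.FinitePresentation A M] [Module.FinitePresentation A P] :
    Module.FinitePresentation A (M ⊗[A] P) := by
  obtain ⟨n, m, f, g, hf, hgf⟩ := Module.FinitePresentation.exists_fin' A P
  have : Module.FinitePresentation A (M ⊗[A] (Fin n → A)) :=
    .of_equiv (piScalarRight A A M (Fin n)).symm
  refine Module.finitePresentation_of_surjective (f.lTensor M)
    (LinearMap.lTensor_surjective M hf) ?_
  rw [(lTensor_exact M hgf hf).linearMap_ker_eq]
  exact .of_finite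

open MonoidalCategory

variable {A : Type u} [CommRing A] (M : ModuleCat.{u} A) {N : ModuleCat.{u} A}
  (P : ProjectiveResolution N)

/-- The complex `M ⊗ P` computing `Tor_•(M, N)`, for a projective resolution `P` of `N`. -/
noncomputable abbrev torComplex : ChainComplex (ModuleCat.{u} A) ℕ :=
  (((tensoringLeft (ModuleCat.{u} A)).obj M).mapHomologicalComplex (.down ℕ)).obj P.complex

/-- The isomorphism `Tor_i(M, N) ≅ H_i(M ⊗ P)` for a projective resolution `P` of `N`. -/
noncomputable def torIsoHomology (i : ℕ) :
    ((Tor (ModuleCat.{u} A) i).obj M).obj N ≅ (torComplex M P).homology i :=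
  P.isoLeftDerivedObj ((tensoringLeft (ModuleCat.{u} A)).obj M) i

theorem finitePresentation_tor [IsCoherentRing A] [Module.FinitePresentation A M]
    [∀ n, Module.Finite A (P.complex.X n)] (i : ℕ) :
    Module.FinitePresentation A (((Tor (ModuleCat.{u} A) i).obj M).obj N) := by
  have hterm (n : ℕ) : Module.FinitePresentation A ((torComplex M P).X n) := by
    have : Module.Projective A (P.complex.X n) :=
      (IsProjective.iff_projective (P.complex.X n)).mpr (P.projective n)
    have := Module.finitePresentation_of_projective A (P.complex.X n)
    exact finitePresentation_tensorProduct M (P.complex.X n)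
  have : Module.FinitePresentation A ((torComplex M P).sc i).X₁ := hterm _
  have : Module.FinitePresentation A ((torComplex M P).sc i).X₂ := hterm _
  have : Module.FinitePresentation A ((torComplex M P).sc i).X₃ := hterm _
  have : Module.FinitePresentation A ((torComplex M P).homology i) :=
    IsCoherentRing.finitePresentation_homology ((torComplex M P).sc i)
  exact .of_equiv (torIsoHomology M P i).toLinearEquiv.symm

theorem isZero_tor {i : ℕ} (hP : Limits.IsZero (P.complex.X i)) :
    Limits.IsZero (((Tor (ModuleCat.{u} A) i).obj M).obj N) := by
  have hterm : Limits.IsZero ((torComplex M P).X i) :=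
    Functor.map_isZero ((tensoringLeft (ModuleCat.{u} A)).obj M) hP
  exact (ShortComplex.isZero_homology_of_isZero_X₂ ((torComplex M P).sc i) hterm).of_iso
    (torIsoHomology M P i)

end Tor

theorem tor_finitely_presented_and_eventually_zero_general {R σ : Type u} [CommRing R]
    [IsNoetherianRing R] {d : ℕ} (hR : HasGlobalDimensionLE R d)
    (M N : Type u) [AddCommGroup M] [Module (MvPolynomial σ R) M]
    [AddCommGroup N] [Module (MvPolynomial σ R) N]
    [hM : Module.FinitePresentation (MvPolynomial σ R) M]
    [hN : Module.FinitePresentation (MvPolynomial σ R) N] :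
    (∀ i : ℕ, Module.FinitePresentation (MvPolynomial σ R)
      (((Tor (ModuleCat (MvPolynomial σ R)) i).obj
          (ModuleCat.of (MvPolynomial σ R) M)).obj
        (ModuleCat.of (MvPolynomial σ R) N))) ∧
    ∃ i₀ : ℕ, ∀ i : ℕ, i₀ ≤ i → Subsingleton
      (((Tor (ModuleCat (MvPolynomial σ R)) i).obj
          (ModuleCat.of (MvPolynomial σ R) M)).obj
        (ModuleCat.of (MvPolynomial σ R) N)) := by
  have : Module.FinitePresentation (MvPolynomial σ R) (ModuleCat.of (MvPolynomial σ R) M) := hM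
  have : Module.FinitePresentation (MvPolynomial σ R) (ModuleCat.of (MvPolynomial σ R) N) := hN
  obtain ⟨n, _⟩ := hR.exists_hasProjectiveDimensionLE_mvPolynomial
    (ModuleCat.of (MvPolynomial σ R) N)
  obtain ⟨P, _, hP⟩ := exists_projectiveResolution_finite n (ModuleCat.of (MvPolynomial σ R) N)
  exact ⟨finitePresentation_tor _ P, n + 1, fun i hi ↦
    ModuleCat.subsingleton_of_isZero (isZero_tor _ P (hP i hi))⟩

/-- Let `A = ℂ[X₁, X₂, …] = MvPolynomial ℕ ℂ` and let `M`,
`N` be finitely presented `A`-modules. Then `Tor_i^A(M, N)` is a finitely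
presented `A`-module for every `i ≥ 0`, and vanishes for all sufficiently
large `i`. -/
theorem tor_finitely_presented_and_eventually_zero
    (M N : Type) [AddCommGroup M] [Module (MvPolynomial ℕ ℂ) M]
    [AddCommGroup N] [Module (MvPolynomial ℕ ℂ) N]
    [Module.FinitePresentation (MvPolynomial ℕ ℂ) M]
    [Module.FinitePresentation (MvPolynomial ℕ ℂ) N] :
    (∀ i : ℕ, Module.FinitePresentation (MvPolynomial ℕ ℂ)
      (((Tor (ModuleCat (MvPolynomial ℕ ℂ)) i).obj
          (ModuleCat.of (MvPolynomial ℕ ℂ) M)).obj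
        (ModuleCat.of (MvPolynomial ℕ ℂ) N))) ∧
    ∃ i₀ : ℕ, ∀ i : ℕ, i₀ ≤ i → Subsingleton
      (((Tor (ModuleCat (MvPolynomial ℕ ℂ)) i).obj
          (ModuleCat.of (MvPolynomial ℕ ℂ) M)).obj
        (ModuleCat.of (MvPolynomial ℕ ℂ) N)) := by
  exact tor_finitely_presented_and_eventually_zero_general
    (hasGlobalDimensionLE_zero_of_divisionRing ℂ) M N
end
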